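/- arXiv:2109.13721 — 2 statements merged into one kernel-verified Lean document; each statement's English description precedes it below -/
import Mathlib

section
/- Let (M,d) be a metric space, τ a topology on M, and f, g : M → ℝ two τ-continuous and τ-coercive functions such that (i) |∇f|(x) = |∇g|(x) < +∞ for every x ∈ M, and (ii) there exists c ∈ ℝ such that g(x) − f(x) = c for all x ∈ Crit(f). Then g = f + c on all of M. -/
/-!
Fix `t > 1`. Since `|∇g| ≤ |∇f|` with finite values, from every non-critical point `x` of `f` one
can move to some `y` with `f y < f x` and `g x - g y < t * (f x - f y)`, that is, with `g - t * f`
increasing strictly. Hence a maximizer `z` of `g - t * f` over a compact sublevel set of `f` is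
critical for `f`, so `g z ≤ f z + c`, and this bounds `g x - f x - c` by `(t - 1) * (f x - min f)`.
Letting `t ↓ 1` gives `g ≤ f + c`, and exchanging `f` and `g` gives the reverse inequality.
-/

open Filter Topology
open scoped ENNReal Classical

/-- The metric slope of `f : M → ℝ` at `x`: it is `0` if `x` is an isolated point of `M`,
and otherwise `limsup_{y → x, y ≠ x} (f x - f y)⁺ / d(x,y)`, with values in `[0, +∞]`. -/
noncomputable def metricSlope {M : Type*} [MetricSpace M] (f : M → ℝ) (x : M) : ℝ≥0∞ :=
  if 𝓝[≠] x = ⊥ then 0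
  else Filter.limsup (fun y => ENNReal.ofReal (max (f x - f y) 0 / dist x y)) (𝓝[≠] x)

/-- `f` is `τ`-coercive: the sublevel set `[f ≤ α]` is `τ`-compact for every `α < sup f`
(the condition `α < sup_{x ∈ M} f x`, with the supremum in the extended reals, is
expressed as `∃ y, α < f y`). -/
def IsSublevelCoercive {M : Type*} (τ : TopologicalSpace M) (f : M → ℝ) : Prop :=
  ∀ α : ℝ, (∃ y, α < f y) → @IsCompact M τ {x | f x ≤ α}

open scoped NNReal

section Slope

variable {M : Type*} [MetricSpace M] {f g : M → ℝ} {x : M}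

theorem metricSlope_eq_limsup (f : M → ℝ) (x : M) :
    metricSlope f x =
      limsup (fun y => ENNReal.ofReal (max (f x - f y) 0 / dist x y)) (𝓝[≠] x) := by
  rw [metricSlope, ite_eq_right_iff]
  intro h
  rw [h, limsup_bot, bot_eq_zero]

theorem frequently_mul_dist_lt_sub_of_lt_metricSlope {a : ℝ≥0} (h : a < metricSlope f x) :
    ∃ᶠ y in 𝓝[≠] x, a * dist x y < f x - f y := by
  rw [metricSlope_eq_limsup] at h
  refine ((frequently_lt_of_lt_limsup (by isBoundedDefault) h).and_eventually
    self_mem_nhdsWithin).mono ?_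
  rintro y ⟨hay, hyx⟩
  rw [ENNReal.coe_lt_ofReal, lt_div_iff₀ (dist_pos.2 (Ne.symm hyx)), lt_max_iff] at hay
  exact hay.resolve_right (by positivity : 0 ≤ a * dist x y).not_gt

theorem eventually_sub_lt_mul_dist_of_metricSlope_lt {b : ℝ≥0} (h : metricSlope g x < b) :
    ∀ᶠ y in 𝓝[≠] x, g x - g y < b * dist x y := by
  rw [metricSlope_eq_limsup] at h
  filter_upwards [eventually_lt_of_limsup_lt h, self_mem_nhdsWithin] with y hyb hyx
  rw [ENNReal.ofReal_lt_coe_iff (by positivity), div_lt_iff₀ (dist_pos.2 (Ne.symm hyx))] at hyb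
  exact (le_max_left _ _).trans_lt hyb

theorem exists_lt_and_sub_lt_mul_of_metricSlope_lt {t : ℝ≥0}
    (h : metricSlope g x < t * metricSlope f x) :
    ∃ y, f y < f x ∧ g x - g y < t * (f x - f y) := by
  have ht : (t : ℝ≥0∞) ≠ 0 := left_ne_zero_of_mul h.ne_bot
  obtain ⟨a, hga, haf⟩ : ∃ a : ℝ≥0, metricSlope g x / t < a ∧ a < metricSlope f x :=
    ENNReal.lt_iff_exists_nnreal_btwn.1 <| ENNReal.div_lt_of_lt_mul' h
  have hg : metricSlope g x < ↑(t * a) := by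
    rwa [ENNReal.div_lt_iff (.inl ht) (.inl ENNReal.coe_ne_top), mul_comm] at hga
  obtain ⟨y, hfy, hgy⟩ := ((frequently_mul_dist_lt_sub_of_lt_metricSlope haf).and_eventually
    (eventually_sub_lt_mul_dist_of_metricSlope_lt hg)).exists
  refine ⟨y, sub_pos.1 <| (by positivity : 0 ≤ a * dist x y).trans_lt hfy, ?_⟩
  calc g x - g y < t * (a * dist x y) := by simpa only [NNReal.coe_mul, mul_assoc] using hgy
    _ ≤ t * (f x - f y) := by gcongr

end Slope

section Descent

variable {X : Type*} {τ : TopologicalSpace X} {f g : X → ℝ}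

theorem IsSublevelCoercive.exists_forall_le [Nonempty X] (hcoer : IsSublevelCoercive τ f)
    (hf : LowerSemicontinuous f) : ∃ x, ∀ y, f x ≤ f y := by
  by_contra! hdesc
  obtain ⟨x₀⟩ := ‹Nonempty X›
  obtain ⟨x₁, hx₁⟩ := hdesc x₀
  obtain ⟨z, hz, hmin⟩ := (hf.lowerSemicontinuousOn _).exists_isMinOn ⟨x₁, le_refl (f x₁)⟩
    (hcoer (f x₁) ⟨x₀, hx₁⟩)
  obtain ⟨w, hw⟩ := hdesc z
  exact (hmin (hw.le.trans hz)).not_gt hw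

theorem IsSublevelCoercive.exists_mem_sub_le_mul (hcoer : IsSublevelCoercive τ f)
    (hf : LowerSemicontinuous f) (hg : UpperSemicontinuous g) {t : ℝ≥0} {C : Set X}
    (hdesc : ∀ x ∉ C, ∃ y, f y < f x ∧ g x - g y < t * (f x - f y)) (x : X) :
    ∃ z ∈ C, g x - g z ≤ t * (f x - f z) := by
  by_cases hx : x ∈ C
  · exact ⟨x, hx, by simp only [sub_self, mul_zero, le_refl]⟩
  obtain ⟨y, hyx, hgy⟩ := hdesc x hx
  have hlsc : LowerSemicontinuous fun z => t * f z + -g z :=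
    ((continuous_const_mul (t : ℝ)).comp_lowerSemicontinuous hf
      (monotone_mul_left_of_nonneg t.coe_nonneg)).add
      (continuous_neg.comp_upperSemicontinuous_antitone hg fun _ _ => neg_le_neg)
  obtain ⟨z, hzy, hmin⟩ := (hlsc.lowerSemicontinuousOn _).exists_isMinOn ⟨y, le_refl (f y)⟩
    (hcoer (f y) ⟨x, hyx⟩)
  have hzC : z ∈ C := by
    by_contra hz
    obtain ⟨w, hwz, hgw⟩ := hdesc z hz
    have hzw : t * f z + -g z ≤ t * f w + -g w := hmin (hwz.le.trans hzy)
    linarith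
  have hzy' : t * f z + -g z ≤ t * f y + -g y := hmin (le_refl (f y))
  exact ⟨z, hzC, by linarith⟩

theorem IsSublevelCoercive.le_add_of_forall_descent (hcoer : IsSublevelCoercive τ f)
    (hf : LowerSemicontinuous f) (hg : UpperSemicontinuous g) {C : Set X} {c : ℝ}
    (hdesc : ∀ t : ℝ≥0, 1 < t → ∀ x ∉ C, ∃ y, f y < f x ∧ g x - g y < t * (f x - f y))
    (hC : ∀ x ∈ C, g x ≤ f x + c) (x : X) : g x ≤ f x + c := by
  have : Nonempty X := ⟨x⟩
  obtain ⟨m, hm⟩ := hcoer.exists_forall_le hf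
  have hbound : ∀ t : ℝ≥0, 1 < t → g x ≤ f x + c + (t - 1) * (f x - f m) := by
    intro t ht
    obtain ⟨z, hzC, hz⟩ := hcoer.exists_mem_sub_le_mul hf hg (hdesc t ht) x
    have ht' : (0 : ℝ) ≤ t - 1 := sub_nonneg.2 (mod_cast ht.le)
    calc g x ≤ g z + t * (f x - f z) := by linarith
      _ ≤ f z + c + t * (f x - f z) := by gcongr; exact hC z hzC
      _ = f x + c + (t - 1) * (f x - f z) := by ring
      _ ≤ f x + c + (t - 1) * (f x - f m) := by gcongr; exact hm z
  have hlim : Tendsto (fun t : ℝ≥0 => f x + c + (t - 1) * (f x - f m)) (𝓝[>] 1)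
      (𝓝 (f x + c)) :=
    tendsto_nhdsWithin_of_tendsto_nhds <|
      Continuous.tendsto' (by fun_prop) _ _ (by rw [NNReal.coe_one]; ring)
  exact ge_of_tendsto hlim <| eventually_mem_nhdsWithin.mono hbound

end Descent

theorem IsSublevelCoercive.le_add_of_metricSlope_le {M : Type*} [MetricSpace M]
    {τ : TopologicalSpace M} {f g : M → ℝ} (hcoer : IsSublevelCoercive τ f)
    (hf : @LowerSemicontinuous M ℝ τ _ f) (hg : @UpperSemicontinuous M ℝ τ _ g)
    (hle : ∀ x, metricSlope g x ≤ metricSlope f x) (hfin : ∀ x, metricSlope g x < ⊤) {c : ℝ}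
    (hcrit : ∀ x, metricSlope f x = 0 → g x ≤ f x + c) (x : M) : g x ≤ f x + c := by
  refine hcoer.le_add_of_forall_descent hf hg (C := {x | metricSlope f x = 0})
    (fun t ht y hy => exists_lt_and_sub_lt_mul_of_metricSlope_lt ?_) hcrit x
  rcases eq_or_ne (metricSlope g y) 0 with hgy | hgy
  · rw [hgy]
    exact ENNReal.mul_pos (mod_cast (zero_lt_one.trans ht).ne') hy
  · calc metricSlope g y = 1 * metricSlope g y := (one_mul _).symm
      _ < t * metricSlope g y := ENNReal.mul_lt_mul_left hgy (hfin y).ne (mod_cast ht)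
      _ ≤ t * metricSlope f y := by gcongr; exact hle y

/-- Determination theorem: if `|∇f| = |∇g| < +∞` everywhere and `g - f = c` on `Crit f`,
then `g = f + c`, for τ-continuous τ-coercive `f, g`. -/
theorem determination_theorem {M : Type*} [MetricSpace M]
    (τ : TopologicalSpace M) (f g : M → ℝ)
    (hf_cont : @Continuous M ℝ τ _ f) (hg_cont : @Continuous M ℝ τ _ g)
    (hf_coer : IsSublevelCoercive τ f) (hg_coer : IsSublevelCoercive τ g)
    (h1 : ∀ x : M, metricSlope f x = metricSlope g x)
    (h2 : ∀ x : M, metricSlope f x < ⊤)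
    (c : ℝ) (hc : ∀ x : M, metricSlope f x = 0 → g x - f x = c) :
    ∀ x : M, g x = f x + c := by
  intro x
  have hle : g x ≤ f x + c :=
    hf_coer.le_add_of_metricSlope_le hf_cont.lowerSemicontinuous hg_cont.upperSemicontinuous
      (fun y => (h1 y).ge) (fun y => h1 y ▸ h2 y) (fun y hy => by linarith [hc y hy]) x
  have hge : f x ≤ g x + -c :=
    hg_coer.le_add_of_metricSlope_le hg_cont.lowerSemicontinuous hf_cont.upperSemicontinuous
      (fun y => (h1 y).le) h2 (fun y hy => by linarith [hc y ((h1 y).trans hy)]) x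
  linarith
end

section
/- Let (M,d) be a compact metric space and let f, g : M → ℝ be two continuous functions (with respect to the metric topology) such that |∇f|(x) and |∇g|(x) are finite for every x ∈ M. Assume (i) |∇f|(x) = |∇g|(x) for all x ∈ M, and (ii) there exists c ∈ ℝ such that g(x) − f(x) = c for all x ∈ Crit(f). Then g = f + c on all of M. -/
open Filter Topology
open scoped ENNReal Classical

/-!
If `g - f` has a local minimum at `x`, then `f` falls near `x` at least as fast as `g` does, so
`|∇g|(x) ≤ |∇f|(x)`. When `|∇f| < |∇g|` off `Crit f`, a minimum of `g - f` over a compact space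
must therefore lie in `Crit f`. If only `|∇f| ≤ |∇g|` is known and `|∇f|` is finite, replacing `g`
by `t * g` with `t > 1` makes the inequality strict off `Crit f`; then let `t → 1`. Equality of
slopes permits this comparison in both directions.
-/

section Slope

variable {M : Type*} [MetricSpace M] {f g : M → ℝ}

theorem metricSlope_const_mul {a : ℝ} (ha : 0 ≤ a) (f : M → ℝ) (x : M) :
    metricSlope (fun y => a * f y) x = ENNReal.ofReal a * metricSlope f x := by
  unfold metricSlope
  split_ifs with hx
  · rw [mul_zero]
  · rw [← ENNReal.limsup_const_mul_of_ne_top ENNReal.ofReal_ne_top]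
    congr 1 with y
    rw [← ENNReal.ofReal_mul ha, ← mul_div_assoc, mul_max_of_nonneg _ _ ha, mul_zero, mul_sub]

theorem metricSlope_le_of_isLocalMin_sub {x : M} (hx : IsLocalMin (fun y => g y - f y) x) :
    metricSlope g x ≤ metricSlope f x := by
  unfold metricSlope
  split_ifs with hiso
  · exact le_rfl
  · refine limsup_le_limsup ?_
    filter_upwards [hx.filter_mono nhdsWithin_le_nhds] with y hy
    have hdrop : g x - g y ≤ f x - f y := by linarith
    gcongr

variable [CompactSpace M] {c : ℝ}

theorem le_sub_of_metricSlope_lt (hgf : LowerSemicontinuous fun x => g x - f x)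
    (hlt : ∀ x, metricSlope f x ≠ 0 → metricSlope f x < metricSlope g x)
    (hc : ∀ x, metricSlope f x = 0 → c ≤ g x - f x) (y : M) : c ≤ g y - f y := by
  obtain ⟨x, -, hx⟩ := (hgf.lowerSemicontinuousOn Set.univ).exists_isMinOn
    ⟨y, Set.mem_univ y⟩ isCompact_univ
  have hslope := metricSlope_le_of_isLocalMin_sub (hx.isLocalMin univ_mem)
  have hcrit : metricSlope f x = 0 := by
    by_contra hne
    exact (hlt x hne).not_ge hslope
  exact (hc x hcrit).trans (hx (Set.mem_univ y))

theorem le_sub_of_metricSlope_le (hf : UpperSemicontinuous f) (hg : LowerSemicontinuous g)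
    (hfin : ∀ x, metricSlope f x ≠ ⊤) (hle : ∀ x, metricSlope f x ≤ metricSlope g x)
    (hc : ∀ x, metricSlope f x = 0 → c ≤ g x - f x) (y : M) : c ≤ g y - f y := by
  obtain ⟨z, -, hz⟩ := (hg.lowerSemicontinuousOn Set.univ).exists_isMinOn
    ⟨y, Set.mem_univ y⟩ isCompact_univ
  have hscaled (t : ℝ) (ht : 1 < t) : c + (t - 1) * g z ≤ t * g y - f y := by
    have ht₀ : 0 ≤ t := zero_le_one.trans ht.le
    refine le_sub_of_metricSlope_lt (g := fun x => t * g x) ?_ (fun x hx => ?_) (fun x hx => ?_) y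
    · have htg : LowerSemicontinuous fun x => t * g x :=
        (continuous_const_mul t).comp_lowerSemicontinuous hg (monotone_mul_left_of_nonneg ht₀)
      have hnf : LowerSemicontinuous fun x => -f x :=
        continuous_neg.comp_upperSemicontinuous_antitone hf fun _ _ => neg_le_neg
      simpa only [sub_eq_add_neg] using htg.add hnf
    · rw [metricSlope_const_mul ht₀]
      calc metricSlope f x = 1 * metricSlope f x := (one_mul _).symm
        _ < ENNReal.ofReal t * metricSlope f x :=
          ENNReal.mul_lt_mul_left hx (hfin x) (ENNReal.one_lt_ofReal.2 ht)
        _ ≤ ENNReal.ofReal t * metricSlope g x := by gcongr; exact hle x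
    · have hgz : (t - 1) * g z ≤ (t - 1) * g x :=
        mul_le_mul_of_nonneg_left (hz (Set.mem_univ x)) (sub_nonneg.2 ht.le)
      linarith [hc x hx]
  have hleft : Tendsto (fun t : ℝ => c + (t - 1) * g z) (𝓝[>] 1) (𝓝 c) :=
    tendsto_nhdsWithin_of_tendsto_nhds (Continuous.tendsto' (by fun_prop) _ _ (by simp))
  have hright : Tendsto (fun t : ℝ => t * g y - f y) (𝓝[>] 1) (𝓝 (g y - f y)) :=
    tendsto_nhdsWithin_of_tendsto_nhds (Continuous.tendsto' (by fun_prop) _ _ (by simp))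
  exact le_of_tendsto_of_tendsto hleft hright (eventually_mem_nhdsWithin.mono hscaled)

end Slope

/-- Determination theorem on a compact metric space: two continuous functions with equal,
everywhere finite slopes that differ by `c` on `Crit f` satisfy `g = f + c`. -/
theorem determination_compact {M : Type*} [MetricSpace M] [CompactSpace M]
    (f g : M → ℝ) (hf_cont : Continuous f) (hg_cont : Continuous g)
    (hf_fin : ∀ x : M, metricSlope f x ≠ ⊤) (hg_fin : ∀ x : M, metricSlope g x ≠ ⊤)
    (h : ∀ x : M, metricSlope f x = metricSlope g x)
    (c : ℝ) (hc : ∀ x : M, metricSlope f x = 0 → g x - f x = c) :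
    ∀ x : M, g x = f x + c := by
  intro x
  have hlower : c ≤ g x - f x :=
    le_sub_of_metricSlope_le hf_cont.upperSemicontinuous hg_cont.lowerSemicontinuous hf_fin
      (fun y => (h y).le) (fun y hy => (hc y hy).ge) x
  have hupper : -c ≤ f x - g x :=
    le_sub_of_metricSlope_le hg_cont.upperSemicontinuous hf_cont.lowerSemicontinuous hg_fin
      (fun y => (h y).ge) (fun y hy => by linarith [hc y ((h y).trans hy)]) x
  linarith
end
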